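/- Generalized variance update formula. Let n ≥ 2, let w_1,…,w_n > 0 be weights, let x_1,…,x_n ∈ ℝ^d, and for 1 ≤ k ≤ n set W_k = Σ_{i=1}^k w_i, x̄_k = (Σ_{i=1}^k w_i x_i)/W_k, and s_k = Σ_{i=1}^k w_i D_ψ(x_i, x̄_k), where ψ : ℝ^d → ℝ is differentiable. Then s_n = s_{n−1} + w_n D_ψ(x_n, x̄_n) + W_{n−1} D_ψ(x̄_{n−1}, x̄_n). -/

import Mathlib

open scoped BigOperators

/-- Bregman divergence `D_ψ(p, q) = ψ(p) − ψ(q) − ⟨∇ψ(q), p − q⟩`. -/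
noncomputable def breg {d : ℕ} (ψ : EuclideanSpace ℝ (Fin d) → ℝ)
    (p q : EuclideanSpace ℝ (Fin d)) : ℝ :=
  ψ p - ψ q - @inner ℝ _ _ (gradient ψ q) (p - q)

/-- The probability simplex Δ_d in ℝ^d. -/
def probSimplex (d : ℕ) : Set (EuclideanSpace ℝ (Fin d)) :=
  {p | (∀ j, 0 ≤ p j) ∧ ∑ j, p j = 1}

/-- The `y`-th standard basis vector of ℝ^d. -/
noncomputable def basisVec {d : ℕ} (y : Fin d) : EuclideanSpace ℝ (Fin d) :=
  EuclideanSpace.single y 1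

/-- `W_k = ∑_{i=1}^k w_i` (1-based). -/
noncomputable def Wsum (w : ℕ → ℝ) (k : ℕ) : ℝ := ∑ i ∈ Finset.Icc 1 k, w i

/-- The weighted mean `x̄_k = (∑_{i=1}^k w_i x_i) / W_k` (1-based). -/
noncomputable def wmean {d : ℕ} (w : ℕ → ℝ) (x : ℕ → EuclideanSpace ℝ (Fin d)) (k : ℕ) :
    EuclideanSpace ℝ (Fin d) :=
  (Wsum w k)⁻¹ • ∑ i ∈ Finset.Icc 1 k, w i • x i

/-!
Expanding `ψ x_i` first around the mean `c` of the points and then around `q` gives the three-point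
identity `D (x_i, q) = D (x_i, c) + D (c, q) + ⟨g c - g q, x_i - c⟩`, where `g` is the gradient.
Weighted deviations from the mean cancel, so the linear term disappears on averaging, and
replacing `c` by `q` costs exactly `W * D (c, q)`. The update formula is this identity for the
first `n - 1` points, with `q` the mean of all `n`.
-/

section BregmanDivergence

/-- The Bregman divergence of `ψ` with slopes `g`: the error at `p` of the affine approximation to
`ψ` that has value `ψ q` and linear part `g q` at `q`. Taking the slopes as a parameter covers
subgradient selections of nonsmooth functions as well as the derivative. -/
def bregmanDiv {R E : Type*} [Ring R] [AddCommGroup E] [Module R E] (ψ : E → R)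
    (g : E → E →ₗ[R] R) (p q : E) : R :=
  ψ p - ψ q - g q (p - q)

theorem bregmanDiv_eq_add_add {R E : Type*} [Ring R] [AddCommGroup E] [Module R E] (ψ : E → R)
    (g : E → E →ₗ[R] R) (p c q : E) :
    bregmanDiv ψ g p q =
      bregmanDiv ψ g p c + bregmanDiv ψ g c q + (g c (p - c) - g q (p - c)) := by
  simp only [bregmanDiv, map_sub]
  abel

variable {ι 𝕜 E : Type*} [Field 𝕜] [AddCommGroup E] [Module 𝕜 E] {s : Finset ι} {w : ι → 𝕜}

theorem sum_smul_sub_centerMass (hw : ∑ i ∈ s, w i ≠ 0) (x : ι → E) :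
    ∑ i ∈ s, w i • (x i - s.centerMass w x) = 0 := by
  simp only [smul_sub, Finset.sum_sub_distrib, ← Finset.sum_smul]
  rw [Finset.centerMass, smul_inv_smul₀ hw, sub_self]

theorem sum_mul_map_sub_centerMass (hw : ∑ i ∈ s, w i ≠ 0) (x : ι → E) (f : E →ₗ[𝕜] 𝕜) :
    ∑ i ∈ s, w i * f (x i - s.centerMass w x) = 0 := by
  simpa only [map_sum, map_smul, smul_eq_mul, map_zero] using
    congrArg f (sum_smul_sub_centerMass hw x)

theorem sum_mul_bregmanDiv_eq_centerMass_add (ψ : E → 𝕜) (g : E → E →ₗ[𝕜] 𝕜)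
    (hw : ∑ i ∈ s, w i ≠ 0) (x : ι → E) (q : E) :
    ∑ i ∈ s, w i * bregmanDiv ψ g (x i) q =
      ∑ i ∈ s, w i * bregmanDiv ψ g (x i) (s.centerMass w x)
        + (∑ i ∈ s, w i) * bregmanDiv ψ g (s.centerMass w x) q := by
  set c := s.centerMass w x
  calc ∑ i ∈ s, w i * bregmanDiv ψ g (x i) q
      = ∑ i ∈ s, (w i * bregmanDiv ψ g (x i) c + w i * bregmanDiv ψ g c q
          + (w i * g c (x i - c) - w i * g q (x i - c))) :=
        Finset.sum_congr rfl fun i _ ↦ by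
          rw [bregmanDiv_eq_add_add ψ g (x i) c q, mul_add, mul_add, mul_sub]
    _ = ∑ i ∈ s, w i * bregmanDiv ψ g (x i) c + (∑ i ∈ s, w i) * bregmanDiv ψ g c q := by
        rw [Finset.sum_add_distrib, Finset.sum_add_distrib, Finset.sum_sub_distrib,
          sum_mul_map_sub_centerMass hw, sum_mul_map_sub_centerMass hw, sub_zero, add_zero,
          Finset.sum_mul]

theorem stmt17_general [DecidableEq ι] (ψ : E → 𝕜) (g : E → E →ₗ[𝕜] 𝕜)
    (hw : ∑ i ∈ s, w i ≠ 0) {a : ι} (ha : a ∉ s) (x : ι → E) (q : E) :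
    ∑ i ∈ insert a s, w i * bregmanDiv ψ g (x i) q =
      ∑ i ∈ s, w i * bregmanDiv ψ g (x i) (s.centerMass w x)
        + w a * bregmanDiv ψ g (x a) q
        + (∑ i ∈ s, w i) * bregmanDiv ψ g (s.centerMass w x) q := by
  rw [Finset.sum_insert ha, sum_mul_bregmanDiv_eq_centerMass_add ψ g hw]
  ring

end BregmanDivergence

theorem Wsum_pos {w : ℕ → ℝ} {k : ℕ} (hk : 1 ≤ k) (hw : ∀ i ∈ Finset.Icc 1 k, 0 < w i) :
    0 < Wsum w k :=
  Finset.sum_pos hw (Finset.nonempty_Icc.mpr hk)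

/-- Generalized variance update formula (Lemma `generalized-sn-thing`):
`s_n = s_{n−1} + w_n D_ψ(x_n, x̄_n) + W_{n−1} D_ψ(x̄_{n−1}, x̄_n)`, where
`s_k = ∑_{i=1}^k w_i D_ψ(x_i, x̄_k)`. -/
theorem stmt17 {d n : ℕ} (hn : 2 ≤ n)
    (ψ : EuclideanSpace ℝ (Fin d) → ℝ) (hψ : Differentiable ℝ ψ)
    (w : ℕ → ℝ) (hw : ∀ i ∈ Finset.Icc 1 n, 0 < w i)
    (x : ℕ → EuclideanSpace ℝ (Fin d)) :
    ∑ i ∈ Finset.Icc 1 n, w i * breg ψ (x i) (wmean w x n)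
      = ∑ i ∈ Finset.Icc 1 (n - 1), w i * breg ψ (x i) (wmean w x (n - 1))
        + w n * breg ψ (x n) (wmean w x n)
        + Wsum w (n - 1) * breg ψ (wmean w x (n - 1)) (wmean w x n) := by
  have hW : Wsum w (n - 1) ≠ 0 :=
    (Wsum_pos (by omega) fun i hi ↦ hw i (Finset.Icc_subset_Icc_right (n.sub_le 1) hi)).ne'
  rw [← Finset.insert_Icc_pred_right_eq_Icc (by omega : 1 ≤ n)]
  exact stmt17_general ψ (fun q ↦ innerₛₗ ℝ (gradient ψ q)) hW (by grind) x (wmean w x n)
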